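/- (Fastest p-periodic trajectory.) Let 𝒜 and ℬ be n×n matrices over the extended reals ℝ̄, let λ be a real number, let p ≥ 1 be an integer, and let x(0) ∈ ℝ̄^n satisfy 𝒜^p ⊗ x(0) = pλ + x(0) (entrywise). Then the trajectory x(k) = 𝒜^k ⊗ x(0) satisfies the upper-bound constraints x(k) ≤ ℬ ⊗' x(k-1) for all k ≥ 1 if and only if 𝒜^i ⊗ x(0) ≤ ℬ ⊗' (𝒜^{i-1} ⊗ x(0)) for all i ∈ {1, …, p}. -/

import Mathlib

/-!
Over `EReal` the map `a + ·` preserves finite suprema even when `a = ±∞` (the empty supremum `⊥` is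
absorbing), so max-plus matrix-vector multiplication is associative and commutes with adding a
scalar `c`. If `𝒜^p ⊗ x(0) = c + x(0)`, it follows that `x(k + p) = c + x(k)` for every `k`.

The two conventions at infinity make `mnAdd b` right adjoint to `-b + ·` even when `b = ±∞`. This
yields the mixed associativity `a + (b +' d) ≤ b +' (a + d)`, where `+'` is min-plus addition.
Hence `u ≤ ℬ ⊗' v` implies `c + u ≤ ℬ ⊗' (c + v)`: a constraint satisfied at time `k` is satisfied
again at time `k + p`.
-/

noncomputable section

/-- Max-plus matrix product over the extended reals (`-∞` is absorbing for `+` in `EReal`). -/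
def mpMul {m n p : ℕ} (A : Matrix (Fin m) (Fin n) EReal) (B : Matrix (Fin n) (Fin p) EReal) :
    Matrix (Fin m) (Fin p) EReal :=
  fun i j => ⨆ k, A i k + B k j

/-- Max-plus matrix-vector product. -/
def mpMulVec {m n : ℕ} (A : Matrix (Fin m) (Fin n) EReal) (x : Fin n → EReal) :
    Fin m → EReal :=
  fun i => ⨆ k, A i k + x k

/-- Min-plus addition on `EReal`: `+∞` is absorbing. -/
def mnAdd (a b : EReal) : EReal := -((-a) + (-b))

/-- Min-plus matrix product. -/
def mnMul {m n p : ℕ} (A : Matrix (Fin m) (Fin n) EReal) (B : Matrix (Fin n) (Fin p) EReal) :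
    Matrix (Fin m) (Fin p) EReal :=
  fun i j => ⨅ k, mnAdd (A i k) (B k j)

/-- Min-plus matrix-vector product. -/
def mnMulVec {m n : ℕ} (A : Matrix (Fin m) (Fin n) EReal) (x : Fin n → EReal) :
    Fin m → EReal :=
  fun i => ⨅ k, mnAdd (A i k) (x k)

/-- Conjugate matrix: `(conj A) i j = -(A j i)`. -/
def conjM {m n : ℕ} (A : Matrix (Fin m) (Fin n) EReal) : Matrix (Fin n) (Fin m) EReal :=
  fun i j => -(A j i)

/-- Max-plus identity matrix. -/
def mpId (n : ℕ) : Matrix (Fin n) (Fin n) EReal :=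
  fun i j => if i = j then 0 else ⊥

/-- Min-plus identity matrix. -/
def mnId (n : ℕ) : Matrix (Fin n) (Fin n) EReal :=
  fun i j => if i = j then 0 else ⊤

/-- Max-plus matrix powers. -/
def mpPow {n : ℕ} (A : Matrix (Fin n) (Fin n) EReal) : ℕ → Matrix (Fin n) (Fin n) EReal
  | 0 => mpId n
  | k + 1 => mpMul A (mpPow A k)

/-- Min-plus matrix powers. -/
def mnPow {n : ℕ} (A : Matrix (Fin n) (Fin n) EReal) : ℕ → Matrix (Fin n) (Fin n) EReal
  | 0 => mnId n
  | k + 1 => mnMul A (mnPow A k)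

/-- Max-plus Kleene star: entrywise supremum of all max-plus powers. -/
def mpStar {n : ℕ} (A : Matrix (Fin n) (Fin n) EReal) : Matrix (Fin n) (Fin n) EReal :=
  fun i j => ⨆ k, mpPow A k i j

/-- Min-plus star: entrywise infimum of all min-plus powers. -/
def mnStar {n : ℕ} (A : Matrix (Fin n) (Fin n) EReal) : Matrix (Fin n) (Fin n) EReal :=
  fun i j => ⨅ k, mnPow A k i j

/-- Entrywise maximum of two matrices (`A ⊕ B`). -/
def mSup {m n : ℕ} (A B : Matrix (Fin m) (Fin n) EReal) : Matrix (Fin m) (Fin n) EReal :=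
  fun i j => A i j ⊔ B i j

theorem ereal_add_iSup {ι : Type*} [Finite ι] (a : EReal) (f : ι → EReal) :
    a + ⨆ i, f i = ⨆ i, a + f i := by
  rcases isEmpty_or_nonempty ι with _ | _
  · simp only [iSup_of_empty, EReal.add_bot]
  · exact Finite.map_iSup_of_monotone f fun _ _ h => add_le_add_right h a

theorem ereal_iSup_add {ι : Type*} [Finite ι] (f : ι → EReal) (a : EReal) :
    (⨆ i, f i) + a = ⨆ i, f i + a := by
  simp only [add_comm _ a, ereal_add_iSup]

section MaxPlus

variable {l m n : ℕ}

theorem mpMulVec_mpMul (A : Matrix (Fin l) (Fin m) EReal) (B : Matrix (Fin m) (Fin n) EReal)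
    (x : Fin n → EReal) : mpMulVec (mpMul A B) x = mpMulVec A (mpMulVec B x) := by
  funext i
  simp only [mpMulVec, mpMul, ereal_add_iSup, ereal_iSup_add, add_assoc]
  exact iSup_comm

theorem mpMulVec_mpId (x : Fin n → EReal) : mpMulVec (mpId n) x = x := by
  funext i
  simp [mpMulVec, mpId, ite_add, iSup_ite]

theorem mpMulVec_const_add (A : Matrix (Fin m) (Fin n) EReal) (c : EReal) (x : Fin n → EReal) :
    mpMulVec A (fun j => c + x j) = fun i => c + mpMulVec A x i := by
  funext i
  simp only [mpMulVec, ereal_add_iSup, add_left_comm]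

theorem mpMulVec_mpPow (A : Matrix (Fin n) (Fin n) EReal) (k : ℕ) (x : Fin n → EReal) :
    mpMulVec (mpPow A k) x = (mpMulVec A)^[k] x := by
  induction k with
  | zero => exact mpMulVec_mpId x
  | succ k ih => rw [mpPow, mpMulVec_mpMul, ih, Function.iterate_succ_apply']

theorem mpMulVec_mpPow_add (A : Matrix (Fin n) (Fin n) EReal) (j k : ℕ) (x : Fin n → EReal) :
    mpMulVec (mpPow A (j + k)) x = mpMulVec (mpPow A j) (mpMulVec (mpPow A k) x) := by
  simp only [mpMulVec_mpPow, Function.iterate_add_apply]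

theorem mpMulVec_mpPow_add_of_eq_const_add {A : Matrix (Fin n) (Fin n) EReal} {c : EReal} {p : ℕ}
    {x : Fin n → EReal} (h : mpMulVec (mpPow A p) x = fun i => c + x i) (k : ℕ) :
    mpMulVec (mpPow A (k + p)) x = fun i => c + mpMulVec (mpPow A k) x i := by
  rw [mpMulVec_mpPow_add, h, mpMulVec_const_add]

end MaxPlus

section MinPlus

variable {m n : ℕ}

theorem le_mnAdd_iff_neg_add_le {a b c : EReal} : a ≤ mnAdd b c ↔ -b + a ≤ c := by
  unfold mnAdd
  induction a <;> induction b <;> induction c <;>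
    simp [← EReal.coe_neg, ← EReal.coe_add, add_comm]

theorem add_mnAdd_le_mnAdd_add (a b c : EReal) : a + mnAdd b c ≤ mnAdd b (a + c) := by
  rw [le_mnAdd_iff_neg_add_le, add_left_comm]
  exact add_le_add_right (le_mnAdd_iff_neg_add_le.mp le_rfl) a

theorem const_add_le_mnMulVec {B : Matrix (Fin m) (Fin n) EReal} {u : Fin m → EReal}
    {v : Fin n → EReal} (h : u ≤ mnMulVec B v) (c : EReal) :
    (fun i => c + u i) ≤ mnMulVec B (fun j => c + v j) := fun i =>
  le_iInf fun j =>
    calc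
      c + u i ≤ c + mnAdd (B i j) (v j) := add_le_add_right ((h i).trans (iInf_le _ j)) c
      _ ≤ mnAdd (B i j) (c + v j) := add_mnAdd_le_mnAdd_add c (B i j) (v j)

end MinPlus

theorem forall_ge_of_forall_lt_add_of_add {P : ℕ → Prop} {a p : ℕ} (hp : 0 < p)
    (base : ∀ k, a ≤ k → k < a + p → P k) (step : ∀ k, a ≤ k → P k → P (k + p)) (k : ℕ)
    (hk : a ≤ k) : P k := by
  induction k using Nat.strong_induction_on with
  | _ k ih =>
    rcases lt_or_ge k (a + p) with hlt | hge
    · exact base k hk hlt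
    · obtain ⟨j, rfl⟩ := Nat.exists_eq_add_of_le' (le_of_add_le_right hge)
      have hj : a ≤ j := le_of_add_le_add_right hge
      exact step j hj (ih j (Nat.lt_add_of_pos_right hp) hj)

theorem fastest_p_periodic_general {n : ℕ} (𝒜 ℬ : Matrix (Fin n) (Fin n) EReal) (c : EReal)
    (p : ℕ) (hp : 1 ≤ p) (x0 : Fin n → EReal)
    (heig : mpMulVec (mpPow 𝒜 p) x0 = fun i => c + x0 i) :
    (∀ k : ℕ, 1 ≤ k →
        mpMulVec (mpPow 𝒜 k) x0 ≤ mnMulVec ℬ (mpMulVec (mpPow 𝒜 (k - 1)) x0)) ↔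
      (∀ i : ℕ, 1 ≤ i → i ≤ p →
        mpMulVec (mpPow 𝒜 i) x0 ≤ mnMulVec ℬ (mpMulVec (mpPow 𝒜 (i - 1)) x0)) := by
  refine ⟨fun h i hi _ => h i hi, fun h => forall_ge_of_forall_lt_add_of_add hp
    (fun k hk hkp => h k hk (by omega)) fun k hk hle => ?_⟩
  rw [Nat.sub_add_comm hk, mpMulVec_mpPow_add_of_eq_const_add heig,
    mpMulVec_mpPow_add_of_eq_const_add heig]
  exact const_add_le_mnMulVec hle c

/-- fastest p-periodic trajectory. -/
theorem fastest_p_periodic {n : ℕ} (𝒜 ℬ : Matrix (Fin n) (Fin n) EReal)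
    (lam : ℝ) (p : ℕ) (hp : 1 ≤ p) (x0 : Fin n → EReal)
    (heig : mpMulVec (mpPow 𝒜 p) x0 = fun i => (((p : ℝ) * lam : ℝ) : EReal) + x0 i) :
    (∀ k : ℕ, 1 ≤ k →
        mpMulVec (mpPow 𝒜 k) x0 ≤ mnMulVec ℬ (mpMulVec (mpPow 𝒜 (k - 1)) x0)) ↔
      (∀ i : ℕ, 1 ≤ i → i ≤ p →
        mpMulVec (mpPow 𝒜 i) x0 ≤ mnMulVec ℬ (mpMulVec (mpPow 𝒜 (i - 1)) x0)) :=
  fastest_p_periodic_general 𝒜 ℬ _ p hp x0 heig
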